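/- arXiv:1702.03514 — 2 statements merged into one kernel-verified Lean document; each statement's English description precedes it below -/
import Mathlib

section
/- Let K be a number field with ring of integers O_K, and let V be a finite-dimensional K-vector space equipped, for each finite place v of K, with a non-Archimedean K_v-norm ‖·‖_v on V ⊗_K K_v. Then the following two conditions are equivalent: (a) for every s ∈ V one has ‖s ⊗ 1‖_v ≤ 1 for all but finitely many finite places v; (b) the set Ĥ⁰_f(V̄) := {s ∈ V : ‖s ⊗ 1‖_v ≤ 1 for every finite place v} contains an O_K-submodule E of V that spans V as a K-vector space. -/
open IsDedekindDomain NumberField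
open scoped TensorProduct NNReal

set_option synthInstance.maxHeartbeats 1000000
set_option maxHeartbeats 1000000

/-- The normalized absolute value at a finite place `v` of a number field `K`,
extended to the `v`-adic completion `K_v`: `|α|_v = (#(𝓞 K / 𝔭_v))^(-ord_v α)`. -/
noncomputable def vabs {K : Type*} [Field K] [NumberField K]
    (v : HeightOneSpectrum (𝓞 K)) (x : v.adicCompletion K) : ℝ :=
  WithZeroMulInt.toNNReal (e := (Nat.card (𝓞 K ⧸ v.asIdeal) : ℝ≥0))
    (by
      haveI : Fintype (𝓞 K ⧸ v.asIdeal) := @Fintype.ofFinite _ (Ideal.finiteQuotientOfFreeOfNeBot _ v.ne_bot)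
      haveI : Finite (𝓞 K ⧸ v.asIdeal) := Finite.of_fintype _
      exact_mod_cast Nat.card_ne_zero.mpr ⟨⟨0⟩, this⟩)
    (Valued.v x)

noncomputable instance adicSMulCommClass {K : Type*} [Field K] [NumberField K]
    (v : HeightOneSpectrum (𝓞 K)) :
    SMulCommClass K (v.adicCompletion K) (v.adicCompletion K) := Algebra.to_smulCommClass

/-!
Let `q v` be the restriction of `‖·‖_v` to `V`. By the ultrametric inequality, the sections `s`
with `q v s ≤ 1` at almost all `v` form a `K`-subspace of `V`, because every `c : K` is integral at
almost all `v`. That subspace is the `K`-span of `Ĥ⁰_f`: if `q v s ≤ 1` fails only at `v₁, …, vₙ`,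
choose nonzero `xᵢ ∈ 𝔭_{vᵢ}` and multiply `s` by a high power of each; the integral multiplier so
obtained brings `s` into `Ĥ⁰_f` and is invertible in `K`. Both conditions therefore say that this
span is all of `V`.
-/

open Filter

theorem exists_ne_zero_smul_mem_iInf {ι R M : Type*} [CommSemiring R] [NoZeroDivisors R]
    [Nontrivial R] [AddCommMonoid M] [Module R M] {B : ι → Submodule R M} {s : M}
    (hfin : ∀ᶠ i in cofinite, s ∈ B i) (hloc : ∀ i, ∃ r : R, r ≠ 0 ∧ r • s ∈ B i) :
    ∃ r : R, r ≠ 0 ∧ r • s ∈ ⨅ i, B i := by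
  choose d hd hds using hloc
  have hbad : {i | s ∉ B i}.Finite := eventually_cofinite.mp hfin
  refine ⟨∏ i ∈ hbad.toFinset, d i, Finset.prod_ne_zero_iff.mpr fun i _ ↦ hd i,
    (Submodule.mem_iInf B).mpr fun i ↦ ?_⟩
  by_cases hi : s ∈ B i
  · exact (B i).smul_mem _ hi
  · obtain ⟨e, he⟩ := Finset.dvd_prod_of_mem d (hbad.mem_toFinset.mpr hi)
    rw [he, mul_comm, mul_smul]
    exact (B i).smul_mem e (hds i)

/-- A non-Archimedean seminorm on a vector space over a field with an absolute value `abv`.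
Nonnegativity is not a field, since it follows from the other two properties. -/
structure IsNonarchSeminorm {K V : Type*} [Field K] [AddCommGroup V] [Module K V]
    (abv : AbsoluteValue K ℝ) (q : V → ℝ) : Prop where
  add_le_max : ∀ x y, q (x + y) ≤ max (q x) (q y)
  smul : ∀ (c : K) (x : V), q (c • x) = abv c * q x

namespace IsNonarchSeminorm

variable {K V : Type*} [Field K] [AddCommGroup V] [Module K V]

section Single

variable {abv : AbsoluteValue K ℝ} {q : V → ℝ}

theorem map_zero (hq : IsNonarchSeminorm abv q) : q 0 = 0 := by
  simpa only [zero_smul, AbsoluteValue.map_zero, zero_mul] using hq.smul 0 0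

theorem map_neg (hq : IsNonarchSeminorm abv q) (x : V) : q (-x) = q x := by
  simpa only [neg_smul, one_smul, AbsoluteValue.map_neg, AbsoluteValue.map_one, one_mul]
    using hq.smul (-1) x

theorem nonneg (hq : IsNonarchSeminorm abv q) (x : V) : 0 ≤ q x :=
  calc
    0 = q (x + -x) := by rw [add_neg_cancel, hq.map_zero]
    _ ≤ max (q x) (q (-x)) := hq.add_le_max x (-x)
    _ = q x := by rw [hq.map_neg, max_self]

theorem add_le_one (hq : IsNonarchSeminorm abv q) {x y : V} (hx : q x ≤ 1) (hy : q y ≤ 1) :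
    q (x + y) ≤ 1 :=
  (hq.add_le_max x y).trans (max_le hx hy)

theorem smul_le_one (hq : IsNonarchSeminorm abv q) {c : K} {x : V} (hc : abv c ≤ 1)
    (hx : q x ≤ 1) : q (c • x) ≤ 1 := by
  rw [hq.smul]
  exact mul_le_one₀ hc (hq.nonneg x) hx

theorem exists_pow_smul_le_one (hq : IsNonarchSeminorm abv q) {c : K} (hc : abv c < 1) (x : V) :
    ∃ n : ℕ, q (c ^ n • x) ≤ 1 := by
  have hlim : Tendsto (fun n : ℕ ↦ abv c ^ n * q x) atTop (nhds 0) := by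
    simpa only [zero_mul] using
      (tendsto_pow_atTop_nhds_zero_of_lt_one (abv.nonneg c) hc).mul_const (q x)
  obtain ⟨n, hn⟩ := (hlim.eventually_le_const one_pos).exists
  exact ⟨n, by rwa [hq.smul, map_pow]⟩

/-- The closed unit ball of a non-Archimedean seminorm, as a module over any ring `A` of scalars
whose elements have absolute value at most `1`. -/
def unitBall (hq : IsNonarchSeminorm abv q) {A : Type*} [CommRing A] [Algebra A K] [Module A V]
    [IsScalarTower A K V] (hA : ∀ a : A, abv (algebraMap A K a) ≤ 1) : Submodule A V where
  carrier := {x | q x ≤ 1}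
  zero_mem' := hq.map_zero.trans_le zero_le_one
  add_mem' := hq.add_le_one
  smul_mem' a x hx := by
    rw [← algebraMap_smul K a x]
    exact hq.smul_le_one (hA a) hx

end Single

/-- For a family of non-Archimedean seminorms, the subspace of the vectors that eventually lie in
the closed unit ball along a filter `l`. It is stable under all of `K` when each scalar eventually
has absolute value at most `1`. -/
def eventualUnitBall {ι : Type*} {abv : ι → AbsoluteValue K ℝ} {q : ι → V → ℝ}
    (hq : ∀ i, IsNonarchSeminorm (abv i) (q i)) (l : Filter ι)
    (hl : ∀ c : K, ∀ᶠ i in l, abv i c ≤ 1) : Submodule K V where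
  carrier := {x | ∀ᶠ i in l, q i x ≤ 1}
  zero_mem' := .of_forall fun i ↦ (hq i).map_zero.trans_le zero_le_one
  add_mem' hx hy := (hx.and hy).mono fun i h ↦ (hq i).add_le_one h.1 h.2
  smul_mem' c _ hx := ((hl c).and hx).mono fun i h ↦ (hq i).smul_le_one h.1 h.2

end IsNonarchSeminorm

section DedekindDomain

variable {R K V : Type*} [CommRing R] [IsDedekindDomain R] [Field K] [Algebra R K]
  [IsFractionRing R K]

theorem adicAbv_le_one_iff (v : HeightOneSpectrum R) {b : ℝ≥0} (hb : 1 < b) {c : K} :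
    v.adicAbv hb c ≤ 1 ↔ v.valuation K c ≤ 1 :=
  NNReal.coe_le_one.trans (WithZeroMulInt.toNNReal_le_one_iff hb)

theorem eventually_adicAbv_le_one {b : HeightOneSpectrum R → ℝ≥0} (hb : ∀ v, 1 < b v) (c : K) :
    ∀ᶠ v : HeightOneSpectrum R in cofinite, v.adicAbv (hb v) c ≤ 1 := by
  filter_upwards [(HeightOneSpectrum.Support.finite R c).eventually_cofinite_notMem] with v hv
  exact (adicAbv_le_one_iff v (hb v)).mpr (not_lt.mp hv)

variable [AddCommGroup V] [Module K V]

theorem exists_ne_zero_smul_le_one [Module R V] [IsScalarTower R K V]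
    (v : HeightOneSpectrum R) {b : ℝ≥0} (hb : 1 < b) {q : V → ℝ}
    (hq : IsNonarchSeminorm (K := K) (v.adicAbv hb) q) (s : V) :
    ∃ r : R, r ≠ 0 ∧ q (r • s) ≤ 1 := by
  obtain ⟨x, hxv, hx⟩ := Submodule.exists_mem_ne_zero_of_ne_bot v.ne_bot
  obtain ⟨n, hn⟩ := hq.exists_pow_smul_le_one ((v.adicAbv_coe_lt_one_iff hb x).mpr hxv) s
  exact ⟨x ^ n, pow_ne_zero n hx, by rwa [← algebraMap_smul K, map_pow]⟩

variable {b : HeightOneSpectrum R → ℝ≥0} {hb : ∀ v, 1 < b v} {q : HeightOneSpectrum R → V → ℝ}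

/-- The `K`-subspace of the sections of `V` that are integral at all but finitely many finite
places. -/
noncomputable def almostIntegralSections
    (hq : ∀ v, IsNonarchSeminorm (K := K) (v.adicAbv (hb v)) (q v)) : Submodule K V :=
  IsNonarchSeminorm.eventualUnitBall hq cofinite (eventually_adicAbv_le_one hb)

theorem mem_almostIntegralSections
    (hq : ∀ v, IsNonarchSeminorm (K := K) (v.adicAbv (hb v)) (q v)) {s : V} :
    s ∈ almostIntegralSections hq ↔ ∀ᶠ v in cofinite, q v s ≤ 1 :=
  Iff.rfl

variable [Module R V] [IsScalarTower R K V]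

/-- The `R`-module `Ĥ⁰_f` of the sections of `V` that are integral at every finite place. -/
noncomputable def integralSections (hq : ∀ v, IsNonarchSeminorm (K := K) (v.adicAbv (hb v)) (q v)) :
    Submodule R V :=
  ⨅ v, (hq v).unitBall (v.adicAbv_coe_le_one (hb v))

theorem mem_integralSections (hq : ∀ v, IsNonarchSeminorm (K := K) (v.adicAbv (hb v)) (q v))
    {s : V} : s ∈ integralSections hq ↔ ∀ v, q v s ≤ 1 :=
  Submodule.mem_iInf _

theorem span_integralSections (hq : ∀ v, IsNonarchSeminorm (K := K) (v.adicAbv (hb v)) (q v)) :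
    Submodule.span K (integralSections hq : Set V) = almostIntegralSections hq := by
  refine le_antisymm (Submodule.span_le.mpr fun s hs ↦ ?_) fun s hs ↦ ?_
  · exact (mem_almostIntegralSections hq).mpr (.of_forall ((mem_integralSections hq).mp hs))
  · obtain ⟨r, hr, hrs⟩ : ∃ r : R, r ≠ 0 ∧ r • s ∈ integralSections hq :=
      exists_ne_zero_smul_mem_iInf hs fun v ↦ exists_ne_zero_smul_le_one v (hb v) (hq v) s
    have hrK : algebraMap R K r ≠ 0 := by simpa using hr
    rw [← Submodule.smul_mem_iff _ hrK, algebraMap_smul]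
    exact Submodule.subset_span hrs

theorem stmt0_general (hq : ∀ v, IsNonarchSeminorm (K := K) (v.adicAbv (hb v)) (q v)) :
    (∀ s : V, {v | ¬ q v s ≤ 1}.Finite) ↔
      ∃ E : Submodule R V, (E : Set V) ⊆ {s : V | ∀ v, q v s ≤ 1} ∧
        Submodule.span K (E : Set V) = ⊤ := by
  constructor
  · intro h
    refine ⟨integralSections hq, fun s ↦ (mem_integralSections hq).mp, ?_⟩
    rw [span_integralSections hq]
    exact Submodule.eq_top_iff'.mpr h
  · rintro ⟨E, hE, hspan⟩ s
    have hle : E ≤ integralSections hq := fun s hs ↦ (mem_integralSections hq).mpr (hE hs)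
    have hs : s ∈ Submodule.span K (integralSections hq : Set V) :=
      Submodule.span_mono hle (hspan ▸ Submodule.mem_top)
    rw [span_integralSections hq] at hs
    exact (mem_almostIntegralSections hq).mp hs

end DedekindDomain

section NumberField

variable {K V : Type*} [Field K] [NumberField K] (v : HeightOneSpectrum (𝓞 K))

theorem one_lt_natCard_quotient : 1 < (Nat.card (𝓞 K ⧸ v.asIdeal) : ℝ≥0) := by
  rw [← Submodule.cardQuot_apply, ← Ideal.absNorm_apply]
  exact NumberField.HeightOneSpectrum.one_lt_absNorm_nnreal v

theorem vabs_algebraMap (c : K) :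
    vabs v (algebraMap K (v.adicCompletion K) c) = v.adicAbv (one_lt_natCard_quotient v) c :=
  congrArg (fun x ↦ ((WithZeroMulInt.toNNReal (one_lt_natCard_quotient v).ne_zero x : ℝ≥0) : ℝ))
    (v.valuedAdicCompletion_eq_valuation' c)

theorem isNonarchSeminorm_one_tmul [AddCommGroup V] [Module K V]
    {N : (v.adicCompletion K) ⊗[K] V → ℝ} (hNmax : ∀ x y, N (x + y) ≤ max (N x) (N y))
    (hNsmul : ∀ (a : v.adicCompletion K) x, N (a • x) = vabs v a * N x) :
    IsNonarchSeminorm (K := K) (v.adicAbv (one_lt_natCard_quotient v))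
      fun s : V ↦ N ((1 : v.adicCompletion K) ⊗ₜ[K] s) where
  add_le_max s t := by
    rw [TensorProduct.tmul_add]
    exact hNmax _ _
  smul c s := by
    rw [← vabs_algebraMap, ← hNsmul, algebraMap_smul, TensorProduct.tmul_smul]

end NumberField

/-- For a finite-dimensional `K`-vector space `V` equipped with a
non-Archimedean `K_v`-norm on `K_v ⊗_K V` for each finite place `v`, the following are
equivalent: (a) each `s ∈ V` satisfies `‖s ⊗ 1‖_v ≤ 1` for all but finitely many `v`;
(b) `Ĥ⁰_f(V̄)` contains an `𝓞 K`-submodule `E` of `V` with `E_K = V`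
(i.e. `E` spans `V` over `K`). -/
theorem stmt0 {K V : Type*} [Field K] [NumberField K]
    [AddCommGroup V] [Module K V] [FiniteDimensional K V]
    [Module (𝓞 K) V] [IsScalarTower (𝓞 K) K V]
    (N : (v : HeightOneSpectrum (𝓞 K)) → ((v.adicCompletion K) ⊗[K] V) → ℝ)
    (hN0 : ∀ v x, 0 ≤ N v x)
    (hNeq : ∀ v x, N v x = 0 ↔ x = 0)
    (hNmax : ∀ v x y, N v (x + y) ≤ max (N v x) (N v y))
    (hNsmul : ∀ (v : HeightOneSpectrum (𝓞 K)) (a : v.adicCompletion K)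
      (x : (v.adicCompletion K) ⊗[K] V), N v (a • x) = vabs v a * N v x) :
    (∀ s : V, {v : HeightOneSpectrum (𝓞 K) |
        ¬ N v ((1 : v.adicCompletion K) ⊗ₜ[K] s) ≤ 1}.Finite) ↔
      ∃ E : Submodule (𝓞 K) V,
        (E : Set V) ⊆ {s : V | ∀ v : HeightOneSpectrum (𝓞 K),
          N v ((1 : v.adicCompletion K) ⊗ₜ[K] s) ≤ 1} ∧
        Submodule.span K (E : Set V) = ⊤ :=
  stmt0_general fun v ↦ isNonarchSeminorm_one_tmul v (hNmax v) (hNsmul v)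
end

section
/- Let R be a commutative ring, let ϖ ∈ R, and let φ be a multiplicative seminorm on R (i.e., φ : R → ℝ with φ(a) ≥ 0, φ(0) = 0, φ(1) = 1, φ(ab) = φ(a)φ(b), and φ(a+b) ≤ φ(a) + φ(b)) such that φ(ϖ) > 0. Then there exists a unique multiplicative seminorm ψ on the localization R[ϖ^{-1}] such that ψ(ι(a)) = φ(a) for all a ∈ R, where ι : R → R[ϖ^{-1}] is the canonical localization map; it is given by ψ(ι(a)/ϖ^n) = φ(ϖ)^{-n}·φ(a). -/
/-!
By the universal property of localization for monoids with zero, `φ` extends uniquely to a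
multiplicative map `ψ` on the localization, with `ψ (a / s) = (φ s)⁻¹ * φ a`. The only property
left is the triangle inequality: over a common denominator it is the triangle inequality for `φ`,
scaled by the nonnegative factor `(φ (s * t))⁻¹`.
-/

/-- `IsMulSeminorm φ` says that the multiplicative map `φ` is a multiplicative seminorm. The values
may lie in any ordered semiring and `R` need not have negatives, unlike in Mathlib's bundled
`MulRingSeminorm`. The conditions at `0`, `1` and on products are part of the type of `φ`. -/
structure IsMulSeminorm {R K : Type*} [Semiring R] [Semiring K] [LE K] (φ : R →*₀ K) : Prop where
  nonneg (a : R) : 0 ≤ φ a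
  add_le (a b : R) : φ (a + b) ≤ φ a + φ b

section Extension

variable {R K : Type*} [CommSemiring R] {M : Submonoid R}
  (S : Type*) [CommSemiring S] [Algebra R S] [IsLocalization M S]

section CommGroupWithZero

variable [CommGroupWithZero K] (φ : R →*₀ K) (hφM : ∀ s ∈ M, φ s ≠ 0)

/-- The multiplicative extension to the localization `S` of `R` at `M` of a multiplicative map
which does not vanish on `M`. -/
noncomputable def localizationExtension : S →*₀ K :=
  (IsLocalization.toLocalizationMap M S).lift₀ φ fun s ↦ (hφM s s.2).isUnit

@[simp]
theorem localizationExtension_algebraMap (a : R) :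
    localizationExtension S φ hφM (algebraMap R S a) = φ a :=
  (IsLocalization.toLocalizationMap M S).lift_eq _ a

theorem localizationExtension_mk' (a : R) (s : M) :
    localizationExtension S φ hφM (IsLocalization.mk' S a s) = (φ s)⁻¹ * φ a := by
  rw [eq_inv_mul_iff_mul_eq₀ (hφM s s.2), ← localizationExtension_algebraMap S φ hφM s,
    ← map_mul, IsLocalization.mk'_spec', localizationExtension_algebraMap]

variable {S φ} in
theorem eq_localizationExtension {ψ : S →*₀ K} (hψ : ∀ a, ψ (algebraMap R S a) = φ a) :
    ψ = localizationExtension S φ hφM :=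
  MonoidWithZeroHom.toMonoidHom_injective <| IsLocalization.monoidHom_ext M <| MonoidHom.ext
    fun a ↦ (hψ a).trans (localizationExtension_algebraMap S φ hφM a).symm

end CommGroupWithZero

section Semifield

variable [Semifield K] [LinearOrder K] [IsStrictOrderedRing K] {φ : R →*₀ K}

theorem IsMulSeminorm.localizationExtension (hφ : IsMulSeminorm φ) (hφM : ∀ s ∈ M, φ s ≠ 0) :
    IsMulSeminorm (localizationExtension S φ hφM) where
  nonneg x := by
    obtain ⟨a, s, rfl⟩ := IsLocalization.exists_mk'_eq M x
    rw [localizationExtension_mk']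
    exact mul_nonneg (inv_nonneg.2 (hφ.nonneg s)) (hφ.nonneg a)
  add_le x y := by
    obtain ⟨a, s, rfl⟩ := IsLocalization.exists_mk'_eq M x
    obtain ⟨b, t, rfl⟩ := IsLocalization.exists_mk'_eq M y
    have hs : φ s ≠ 0 := hφM s s.2
    have ht : φ t ≠ 0 := hφM t t.2
    rw [← IsLocalization.mk'_add]
    simp only [localizationExtension_mk']
    calc (φ ↑(s * t))⁻¹ * φ (a * t + b * s)
        ≤ (φ ↑(s * t))⁻¹ * (φ (a * t) + φ (b * s)) :=
          mul_le_mul_of_nonneg_left (hφ.add_le _ _) (inv_nonneg.2 (hφ.nonneg _))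
      _ = (φ s)⁻¹ * φ a + (φ t)⁻¹ * φ b := by
          simp only [Submonoid.coe_mul, map_mul]
          field_simp

theorem stmt5_general (hφ : IsMulSeminorm φ) (hφM : ∀ s ∈ M, φ s ≠ 0) :
    ∃ ψ : S →*₀ K,
      (IsMulSeminorm ψ ∧ (∀ a, ψ (algebraMap R S a) = φ a) ∧
        ∀ (a : R) (s : M), ψ (IsLocalization.mk' S a s) = (φ s)⁻¹ * φ a) ∧
      ∀ ψ' : S →*₀ K, (∀ a, ψ' (algebraMap R S a) = φ a) → ψ' = ψ :=
  ⟨localizationExtension S φ hφM,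
    ⟨hφ.localizationExtension S hφM, localizationExtension_algebraMap S φ hφM,
      localizationExtension_mk' S φ hφM⟩,
    fun _ ↦ eq_localizationExtension hφM⟩

end Semifield

end Extension

theorem algebraMap_mul_invSelf_pow {R S : Type*} [CommSemiring R] [CommSemiring S] [Algebra R S]
    (x : R) [IsLocalization.Away x S] (a : R) (n : ℕ) :
    algebraMap R S a * IsLocalization.Away.invSelf x ^ n =
      IsLocalization.mk' S a (⟨x, Submonoid.mem_powers x⟩ ^ n : Submonoid.powers x) := by
  rw [IsLocalization.Away.invSelf, ← IsLocalization.mk'_pow, one_pow,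
    ← IsLocalization.mk'_eq_mul_mk'_one]

theorem map_ne_zero_of_mem_powers {R K : Type*} [MonoidWithZero R] [MonoidWithZero K]
    [NoZeroDivisors K] (φ : R →*₀ K) {x : R} (hx : φ x ≠ 0) :
    ∀ s ∈ Submonoid.powers x, φ s ≠ 0 := by
  rintro _ ⟨n, rfl⟩
  simpa only [map_pow] using pow_ne_zero n hx

/-- Extension of a multiplicative seminorm `φ` with `φ ϖ > 0` to the localization
`R[ϖ⁻¹]`: there is a unique multiplicative seminorm `ψ` on `R[ϖ⁻¹]` with `ψ ∘ ι = φ`,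
and it satisfies `ψ(ι a / ϖ^n) = φ(ϖ)⁻ⁿ · φ(a)`. -/
theorem stmt5 {R : Type*} [CommRing R] (ϖ : R) (φ : R → ℝ)
    (hφ0 : ∀ a : R, 0 ≤ φ a) (hφz : φ 0 = 0) (hφ1 : φ 1 = 1)
    (hφm : ∀ a b : R, φ (a * b) = φ a * φ b)
    (hφa : ∀ a b : R, φ (a + b) ≤ φ a + φ b)
    (hϖ : 0 < φ ϖ) :
    ∃ ψ : Localization.Away ϖ → ℝ,
      (((∀ x, 0 ≤ ψ x) ∧ ψ 0 = 0 ∧ ψ 1 = 1 ∧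
          (∀ x y, ψ (x * y) = ψ x * ψ y) ∧ (∀ x y, ψ (x + y) ≤ ψ x + ψ y)) ∧
        (∀ a : R, ψ (algebraMap R (Localization.Away ϖ) a) = φ a) ∧
        (∀ (a : R) (n : ℕ),
          ψ (algebraMap R (Localization.Away ϖ) a * (IsLocalization.Away.invSelf ϖ) ^ n) =
            (φ ϖ) ^ (-(n : ℤ)) * φ a)) ∧
      ∀ ψ' : Localization.Away ϖ → ℝ,
        (((∀ x, 0 ≤ ψ' x) ∧ ψ' 0 = 0 ∧ ψ' 1 = 1 ∧
            (∀ x y, ψ' (x * y) = ψ' x * ψ' y) ∧ (∀ x y, ψ' (x + y) ≤ ψ' x + ψ' y)) ∧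
          (∀ a : R, ψ' (algebraMap R (Localization.Away ϖ) a) = φ a)) → ψ' = ψ := by
  obtain ⟨ψ, ⟨hψ, hψι, hψmk⟩, hψ_unique⟩ :=
    stmt5_general (Localization.Away ϖ) (φ := ⟨⟨φ, hφz⟩, hφ1, hφm⟩) ⟨hφ0, hφa⟩
      (map_ne_zero_of_mem_powers _ hϖ.ne')
  refine ⟨ψ, ⟨⟨hψ.nonneg, map_zero ψ, map_one ψ, map_mul ψ, hψ.add_le⟩, hψι, fun a n ↦ ?_⟩, ?_⟩
  · rw [algebraMap_mul_invSelf_pow, hψmk, SubmonoidClass.coe_pow, map_pow, zpow_neg, zpow_natCast,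
      MonoidWithZeroHom.coe_mk, ZeroHom.coe_mk]
  · rintro ψ' ⟨⟨-, hzero, hone, hmul, -⟩, hι⟩
    exact congrArg DFunLike.coe (hψ_unique ⟨⟨ψ', hzero⟩, hone, hmul⟩ hι)
end
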